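/- Let S be a subset of M containing infinitely many ideals. Suppose there exist a constant β with 0 < β ≤ 1, a function y = y(x) with 1 < y(x) < x^β, and real constants λ_p for each prime ideal p (with e_p(x) defined by the density relations) such that: (a) for each m ∈ S(x), the number of prime ideals p with N(p) > x^β and p | m is O_β(1); (b) Σ_{y < N(p) ≤ x^β} λ_p = o((log log x)^{1/2}); (c) Σ_{y < N(p) ≤ x^β} |e_p(x)| = o((log log x)^{1/2}). Then the following two assertions are equivalent: (i) for every γ ∈ ℝ, lim_{x → ∞} (1/|S(x)|) · |{m ∈ S(x) : (ω(m) − log log x)/√(log log x) ≤ γ}| = Φ(γ); (ii) for every γ ∈ ℝ, lim_{x → ∞} (1/|S(x)|) · |{m ∈ S(x) : (ω_{y(x)}(m) − log log x)/√(log log x) ≤ γ}| = Φ(γ). -/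

import Mathlib

open Filter MeasureTheory Topology
open scoped BigOperators

noncomputable section

variable (K : Type) [Field K] [NumberField K]

/-- The standard Gaussian distribution function Φ. -/
def gaussPhi (γ : ℝ) : ℝ :=
  (Real.sqrt (2 * Real.pi))⁻¹ * ∫ u in Set.Iic γ, Real.exp (-u ^ 2 / 2)

/-- Number of distinct prime ideal divisors of an ideal. -/
def omegaI (m : Ideal (NumberField.RingOfIntegers K)) : ℕ :=
  Nat.card {p : Ideal (NumberField.RingOfIntegers K) // p.IsPrime ∧ p ∣ m}

/-- Number of distinct prime ideal divisors of `m` with norm at most `y`. -/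
def omegaLe (y : ℝ) (m : Ideal (NumberField.RingOfIntegers K)) : ℕ :=
  Nat.card {p : Ideal (NumberField.RingOfIntegers K) //
    p.IsPrime ∧ (Ideal.absNorm p : ℝ) ≤ y ∧ p ∣ m}

/-- The number of elements of `S` with norm at most `x`. -/
def countS (S : Set (Ideal (NumberField.RingOfIntegers K))) (x : ℝ) : ℕ :=
  Nat.card {m : Ideal (NumberField.RingOfIntegers K) //
    m ∈ S ∧ (Ideal.absNorm m : ℝ) ≤ x}

/-!
Every prime ideal dividing `m` has norm at most `y`, between `y` and `z = x ^ β`, or beyond `z`, so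
averaging `ω(m) - ω_y(m)` over `S(x)` and exchanging the two sums bounds the mean by
`∑ λ_p + ∑ |e_p(x)| + C`, which is `o(√(log log x))` by (a)–(c). By Markov's inequality the two
normalised functions then differ by at most `δ` outside a proportion `o(1)` of `S(x)`, for each
`δ > 0`, so each distribution function is bounded by a shift of the other up to `o(1)`, and the
continuity of `Φ` lets the shift tend to `0`.
-/

theorem continuous_gaussPhi : Continuous gaussPhi := by
  have integrable_exp : Integrable fun u : ℝ => Real.exp (-u ^ 2 / 2) := by
    convert integrable_exp_neg_mul_sq (one_half_pos (α := ℝ)) using 3 with u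
    ring
  have continuous_integral : Continuous fun γ => ∫ u in Set.Iic γ, Real.exp (-u ^ 2 / 2) :=
    continuous_iff_continuousAt.2 fun γ =>
      integrable_exp.integrableOn.continuousOn_Iic_primitive_Iic.continuousAt
        (Iic_mem_nhds (lt_add_one γ))
  exact continuous_const.mul continuous_integral

theorem tendsto_sqrt_log_log_atTop :
    Tendsto (fun x : ℝ => Real.sqrt (Real.log (Real.log x))) atTop atTop :=
  Real.tendsto_sqrt_atTop.comp (Real.tendsto_log_atTop.comp Real.tendsto_log_atTop)

section Proportion

variable {α ι : Type*} {l : Filter ι} {Φ : ℝ → ℝ}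

/-- The proportion `#(T ∩ A) / #T` of the elements of `T` lying in `A`, encoded as the mean of an
indicator function so that the calculus of `𝔼` applies. It is `0` if `T` is empty. -/
def proportion (T : Finset α) (A : Set α) : ℝ :=
  𝔼 a ∈ T, A.indicator 1 a

open Classical in
theorem proportion_eq_card_div_card (T : Finset α) (A : Set α) :
    proportion T A = ((T.filter (· ∈ A)).card : ℝ) / T.card := by
  simp only [proportion, Finset.expect_eq_sum_div_card, Set.indicator_apply, Pi.one_apply,
    Finset.sum_boole]

open Classical in
theorem expect_card_filter {κ : Type*} (T : Finset α) (P : Finset κ) (r : κ → α → Prop) :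
    𝔼 a ∈ T, ((P.filter (r · a)).card : ℝ) = ∑ p ∈ P, proportion T {a | r p a} := by
  simp only [proportion, ← Finset.expect_sum_comm, Set.indicator_apply, Set.mem_ofPred_eq,
    Pi.one_apply, Finset.sum_boole]

theorem proportion_le_shift_add_expect (T : Finset α) (f g : α → ℝ) (γ : ℝ) {δ : ℝ}
    (hδ : 0 < δ) :
    proportion T {a | f a ≤ γ} ≤
      proportion T {a | g a ≤ γ + δ} + (𝔼 a ∈ T, |f a - g a|) / δ := by
  rw [proportion, proportion, Finset.expect_div, ← Finset.expect_add_distrib]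
  refine Finset.expect_le_expect fun a _ => ?_
  have quotient_nonneg : 0 ≤ |f a - g a| / δ := by positivity
  by_cases hf : f a ≤ γ <;> by_cases hg : g a ≤ γ + δ <;>
    simp only [Set.indicator_apply, Set.mem_ofPred_eq, hf, hg, if_true, if_false, Pi.one_apply]
  · linarith
  · have : δ ≤ |f a - g a| := by linarith [neg_le_abs (f a - g a)]
    linarith [(one_le_div hδ).2 this]
  · linarith
  · linarith

theorem tendsto_of_le_shift {F G r : ℝ → ι → ℝ} (hΦ : Continuous Φ)
    (hFG : ∀ γ δ, 0 < δ → ∀ᶠ x in l, F γ x ≤ G (γ + δ) x + r δ x)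
    (hGF : ∀ γ δ, 0 < δ → ∀ᶠ x in l, G γ x ≤ F (γ + δ) x + r δ x)
    (hr : ∀ δ, 0 < δ → Tendsto (r δ) l (𝓝 0))
    (hF : ∀ γ, Tendsto (F γ) l (𝓝 (Φ γ))) (γ : ℝ) :
    Tendsto (G γ) l (𝓝 (Φ γ)) := by
  refine tendsto_order.2 ⟨fun a ha => ?_, fun b hb => ?_⟩
  · obtain ⟨δ, hΦδ, hδ⟩ : ∃ δ, a < Φ (γ - δ) ∧ 0 < δ := by
      have : Tendsto (fun δ => Φ (γ - δ)) (𝓝[>] 0) (𝓝 (Φ γ)) :=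
        ((hΦ.comp (continuous_sub_left γ)).tendsto' 0 _ (by simp)).mono_left nhdsWithin_le_nhds
      exact ((this.eventually_const_lt ha).and self_mem_nhdsWithin).exists
    have lower_limit : Tendsto (fun x => F (γ - δ) x - r δ x) l (𝓝 (Φ (γ - δ))) := by
      simpa only [sub_zero] using (hF (γ - δ)).sub (hr δ hδ)
    filter_upwards [lower_limit.eventually_const_lt hΦδ, hFG (γ - δ) δ hδ] with x hlt hle
    rw [sub_add_cancel] at hle
    linarith
  · obtain ⟨δ, hΦδ, hδ⟩ : ∃ δ, Φ (γ + δ) < b ∧ 0 < δ := by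
      have : Tendsto (fun δ => Φ (γ + δ)) (𝓝[>] 0) (𝓝 (Φ γ)) :=
        ((hΦ.comp (continuous_const_add γ)).tendsto' 0 _ (by simp)).mono_left nhdsWithin_le_nhds
      exact ((this.eventually_lt_const hb).and self_mem_nhdsWithin).exists
    have upper_limit : Tendsto (fun x => F (γ + δ) x + r δ x) l (𝓝 (Φ (γ + δ))) := by
      simpa only [add_zero] using (hF (γ + δ)).add (hr δ hδ)
    filter_upwards [upper_limit.eventually_lt_const hΦδ, hGF γ δ hδ] with x hlt hle
    exact hle.trans_lt hlt

theorem tendsto_proportion_le_of_tendsto_expect_abs_sub {T : ι → Finset α} {f g : ι → α → ℝ}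
    (hΦ : Continuous Φ) (hfg : Tendsto (fun x => 𝔼 a ∈ T x, |f x a - g x a|) l (𝓝 0))
    (hf : ∀ γ, Tendsto (fun x => proportion (T x) {a | f x a ≤ γ}) l (𝓝 (Φ γ))) (γ : ℝ) :
    Tendsto (fun x => proportion (T x) {a | g x a ≤ γ}) l (𝓝 (Φ γ)) := by
  refine tendsto_of_le_shift
    (F := fun γ x => proportion (T x) {a | f x a ≤ γ})
    (G := fun γ x => proportion (T x) {a | g x a ≤ γ})
    (r := fun δ x => (𝔼 a ∈ T x, |f x a - g x a|) / δ) hΦ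
    (fun γ δ hδ => .of_forall fun x => ?_) (fun γ δ hδ => .of_forall fun x => ?_)
    (fun δ _ => ?_) hf γ
  · exact proportion_le_shift_add_expect (T x) (f x) (g x) γ hδ
  · simpa only [abs_sub_comm] using proportion_le_shift_add_expect (T x) (g x) (f x) γ hδ
  · simpa only [zero_div] using hfg.div_const δ

theorem tendsto_proportion_le_iff_of_expect_abs_sub_isLittleO {T : ι → Finset α}
    {f g : ι → α → ℝ} {A B : ι → ℝ} (hΦ : Continuous Φ)
    (hfg : (fun x => 𝔼 a ∈ T x, |f x a - g x a|) =o[l] B) :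
    (∀ γ, Tendsto (fun x => proportion (T x) {a | (f x a - A x) / B x ≤ γ}) l (𝓝 (Φ γ))) ↔
      ∀ γ, Tendsto (fun x => proportion (T x) {a | (g x a - A x) / B x ≤ γ}) l (𝓝 (Φ γ)) := by
  have expect_normalized : Tendsto
      (fun x => 𝔼 a ∈ T x, |(f x a - A x) / B x - (g x a - A x) / B x|) l (𝓝 0) := by
    simpa only [← sub_div, sub_sub_sub_cancel_right, abs_div, ← Finset.expect_div] using
      hfg.abs_right.tendsto_div_nhds_zero
  refine ⟨tendsto_proportion_le_of_tendsto_expect_abs_sub hΦ expect_normalized,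
    tendsto_proportion_le_of_tendsto_expect_abs_sub hΦ ?_⟩
  simpa only [abs_sub_comm] using expect_normalized

end Proportion

section PrimeIdealDivisors

open scoped NumberField

variable {K}

theorem finite_setOf_ideal_dvd {R : Type*} [CommRing R] [IsDedekindDomain R] {m : Ideal R}
    (hm : m ≠ 0) : {p : Ideal R | p ∣ m}.Finite :=
  have : Fintype {p : Ideal R // p ∣ m} := UniqueFactorizationMonoid.fintypeSubtypeDvd m hm
  Set.finite_coe_iff.1 (Finite.of_fintype {p : Ideal R // p ∣ m})

theorem finite_setOf_mem_and_absNorm_le (S : Set (Ideal (𝓞 K))) (x : ℝ) :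
    {m | m ∈ S ∧ (Ideal.absNorm m : ℝ) ≤ x}.Finite :=
  (Ideal.finite_setOfPred_absNorm_le (S := 𝓞 K) ⌊x⌋₊).subset fun _ hm => Nat.le_floor hm.2

/-- The finite set written `S(x)` in the paper: the ideals in `S` of norm at most `x`. -/
def idealsUpTo (S : Set (Ideal (𝓞 K))) (x : ℝ) : Finset (Ideal (𝓞 K)) :=
  (finite_setOf_mem_and_absNorm_le S x).toFinset

@[simp]
theorem mem_idealsUpTo {S : Set (Ideal (𝓞 K))} {x : ℝ} {m : Ideal (𝓞 K)} :
    m ∈ idealsUpTo S x ↔ m ∈ S ∧ (Ideal.absNorm m : ℝ) ≤ x :=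
  Set.Finite.mem_toFinset _

theorem countS_eq_card_idealsUpTo (S : Set (Ideal (𝓞 K))) (x : ℝ) :
    countS K S x = (idealsUpTo S x).card :=
  Set.ncard_eq_toFinset_card _ _

theorem eventually_idealsUpTo_nonempty {S : Set (Ideal (𝓞 K))} (hS : S.Nonempty) :
    ∀ᶠ x in atTop, (idealsUpTo S x).Nonempty := by
  obtain ⟨m, hm⟩ := hS
  filter_upwards [eventually_ge_atTop (Ideal.absNorm m : ℝ)] with x hx
  exact ⟨m, mem_idealsUpTo.2 ⟨hm, hx⟩⟩

theorem natCard_div_countS_eq_proportion (S : Set (Ideal (𝓞 K))) (x : ℝ)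
    (P : Ideal (𝓞 K) → Prop) :
    (Nat.card {m : Ideal (𝓞 K) // m ∈ S ∧ (Ideal.absNorm m : ℝ) ≤ x ∧ P m} : ℝ) /
      (countS K S x : ℝ) = proportion (idealsUpTo S x) {m | P m} := by
  classical
  have card_filter : Nat.card {m : Ideal (𝓞 K) // m ∈ S ∧ (Ideal.absNorm m : ℝ) ≤ x ∧ P m} =
      ((idealsUpTo S x).filter P).card := by
    rw [← Set.ncard_coe_finset]
    simp only [Finset.coe_filter, mem_idealsUpTo, and_assoc]
    rfl
  rw [proportion_eq_card_div_card, countS_eq_card_idealsUpTo, card_filter]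
  simp only [Set.mem_ofPred_eq]

variable (K) in
/-- The prime ideals `p` with `a < N(p) ≤ b`. The zero ideal, prime but of norm `0`, belongs to it
when `a < 0 ≤ b`. -/
def primeIdealsIoc (a b : ℝ) : Finset (Ideal (𝓞 K)) :=
  idealsUpTo {p | p.IsPrime ∧ a < (Ideal.absNorm p : ℝ)} b

theorem mem_primeIdealsIoc {a b : ℝ} {p : Ideal (𝓞 K)} :
    p ∈ primeIdealsIoc K a b ↔
      p.IsPrime ∧ a < (Ideal.absNorm p : ℝ) ∧ (Ideal.absNorm p : ℝ) ≤ b :=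
  mem_idealsUpTo.trans and_assoc

theorem tsum_eq_sum_primeIdealsIoc (a b : ℝ) (f : Ideal (𝓞 K) → ℝ) :
    ∑' p : {p : Ideal (𝓞 K) //
      p.IsPrime ∧ a < (Ideal.absNorm p : ℝ) ∧ (Ideal.absNorm p : ℝ) ≤ b}, f p.1 =
        ∑ p ∈ primeIdealsIoc K a b, f p := by
  rw [← Finset.tsum_subtype]
  exact (Equiv.subtypeEquivRight fun p => mem_primeIdealsIoc.symm).tsum_eq
    fun p : {p // p ∈ primeIdealsIoc K a b} => f p

theorem omegaLe_le_omegaI {m : Ideal (𝓞 K)} (hm : m ≠ 0) (a : ℝ) :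
    omegaLe K a m ≤ omegaI K m :=
  Set.ncard_le_ncard (fun _ hp => ⟨hp.1, hp.2.2⟩)
    ((finite_setOf_ideal_dvd hm).subset fun _ hp => hp.2)

open Classical in
theorem omegaI_le_omegaLe_add {m : Ideal (𝓞 K)} (hm : m ≠ 0) (a b : ℝ) :
    omegaI K m ≤ omegaLe K a m + ((primeIdealsIoc K a b).filter (· ∣ m)).card +
      Nat.card {p : Ideal (𝓞 K) // p.IsPrime ∧ b < (Ideal.absNorm p : ℝ) ∧ p ∣ m} := by
  let small : Set (Ideal (𝓞 K)) := {p | p.IsPrime ∧ (Ideal.absNorm p : ℝ) ≤ a ∧ p ∣ m}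
  let medium : Finset (Ideal (𝓞 K)) := (primeIdealsIoc K a b).filter (· ∣ m)
  let large : Set (Ideal (𝓞 K)) := {p | p.IsPrime ∧ b < (Ideal.absNorm p : ℝ) ∧ p ∣ m}
  have cover : {p | p.IsPrime ∧ p ∣ m} ⊆ small ∪ medium ∪ large := by
    rintro p ⟨hp, hpm⟩
    rcases le_or_gt (Ideal.absNorm p : ℝ) a with hpa | hpa
    · exact .inl (.inl ⟨hp, hpa, hpm⟩)
    rcases le_or_gt (Ideal.absNorm p : ℝ) b with hpb | hpb
    · exact .inl (.inr (Finset.mem_filter.2 ⟨mem_primeIdealsIoc.2 ⟨hp, hpa, hpb⟩, hpm⟩))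
    · exact .inr ⟨hp, hpb, hpm⟩
  have small_finite : small.Finite := (finite_setOf_ideal_dvd hm).subset fun _ hp => hp.2.2
  have large_finite : large.Finite := (finite_setOf_ideal_dvd hm).subset fun _ hp => hp.2.2
  calc omegaI K m
      ≤ (small ∪ medium ∪ large).ncard :=
        Set.ncard_le_ncard cover ((small_finite.union medium.finite_toSet).union large_finite)
    _ ≤ (small ∪ medium).ncard + large.ncard := Set.ncard_union_le _ _
    _ ≤ small.ncard + medium.card + large.ncard := by
        grw [Set.ncard_union_le, Set.ncard_coe_finset]

theorem expect_abs_omegaI_sub_omegaLe_le {S : Set (Ideal (𝓞 K))} (hS0 : 0 ∉ S) {x a b C : ℝ}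
    (hne : (idealsUpTo S x).Nonempty)
    (hC : ∀ m ∈ S, (Ideal.absNorm m : ℝ) ≤ x →
      (Nat.card {p : Ideal (𝓞 K) // p.IsPrime ∧ b < (Ideal.absNorm p : ℝ) ∧ p ∣ m} : ℝ) ≤ C) :
    𝔼 m ∈ idealsUpTo S x, |(omegaI K m : ℝ) - omegaLe K a m| ≤
      ∑ p ∈ primeIdealsIoc K a b, proportion (idealsUpTo S x) {m | p ∣ m} + C := by
  classical
  rw [← expect_card_filter, ← Finset.expect_const hne C, ← Finset.expect_add_distrib]
  refine Finset.expect_le_expect fun m hm => ?_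
  obtain ⟨hmS, hmx⟩ := mem_idealsUpTo.1 hm
  have hm0 : m ≠ 0 := ne_of_mem_of_not_mem hmS hS0
  rw [abs_of_nonneg (sub_nonneg.2 (Nat.cast_le.2 (omegaLe_le_omegaI hm0 a))), sub_le_iff_le_add]
  have upper : (omegaI K m : ℝ) ≤ _ := Nat.cast_le.2 (omegaI_le_omegaLe_add hm0 a b)
  push_cast at upper
  linarith [hC m hmS hmx]

theorem expect_abs_omegaI_sub_omegaLe_isLittleO {S : Set (Ideal (𝓞 K))} (hS0 : 0 ∉ S)
    (hS : S.Nonempty) {y z B : ℝ → ℝ} (hB : Tendsto B atTop atTop)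
    {lam : Ideal (𝓞 K) → ℝ} {e : Ideal (𝓞 K) → ℝ → ℝ}
    (hdensity : ∀ p : Ideal (𝓞 K), p.IsPrime → ∀ x,
      proportion (idealsUpTo S x) {m | p ∣ m} = lam p + e p x)
    (ha : ∃ C : ℝ, ∀ᶠ x in atTop, ∀ m ∈ S, (Ideal.absNorm m : ℝ) ≤ x →
      (Nat.card {p : Ideal (𝓞 K) //
        p.IsPrime ∧ z x < (Ideal.absNorm p : ℝ) ∧ p ∣ m} : ℝ) ≤ C)
    (hb : (fun x => ∑ p ∈ primeIdealsIoc K (y x) (z x), lam p) =o[atTop] B)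
    (hc : (fun x => ∑ p ∈ primeIdealsIoc K (y x) (z x), |e p x|) =o[atTop] B) :
    (fun x => 𝔼 m ∈ idealsUpTo S x, |(omegaI K m : ℝ) - omegaLe K (y x) m|) =o[atTop] B := by
  obtain ⟨C, hC⟩ := ha
  have const_isLittleO : (fun _ : ℝ => C) =o[atTop] B :=
    Asymptotics.isLittleO_const_left.2 (.inr (tendsto_norm_atTop_atTop.comp hB))
  refine (Asymptotics.IsBigO.of_bound' ?_).trans_isLittleO ((hb.add hc).add const_isLittleO)
  filter_upwards [hC, eventually_idealsUpTo_nonempty hS] with x hCx hne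
  have sum_proportion_le : ∑ p ∈ primeIdealsIoc K (y x) (z x),
      proportion (idealsUpTo S x) {m | p ∣ m} ≤
        ∑ p ∈ primeIdealsIoc K (y x) (z x), lam p +
          ∑ p ∈ primeIdealsIoc K (y x) (z x), |e p x| := by
    rw [← Finset.sum_add_distrib]
    refine Finset.sum_le_sum fun p hp => ?_
    rw [hdensity p (mem_primeIdealsIoc.1 hp).1 x]
    gcongr
    exact le_abs_self _
  rw [Real.norm_of_nonneg (Finset.expect_nonneg fun _ _ => abs_nonneg _)]
  refine le_trans ?_ (Real.le_norm_self _)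
  exact (expect_abs_omegaI_sub_omegaLe_le hS0 hne hCx).trans (by gcongr)

theorem gaussian_omega_iff_gaussian_omega_truncated_general
    {S : Set (Ideal (𝓞 K))} (hS0 : 0 ∉ S) (hS : S.Nonempty) {y z A B Φ : ℝ → ℝ}
    (hB : Tendsto B atTop atTop) (hΦ : Continuous Φ)
    {lam : Ideal (𝓞 K) → ℝ} {e : Ideal (𝓞 K) → ℝ → ℝ}
    (hdensity : ∀ p : Ideal (𝓞 K), p.IsPrime → ∀ x : ℝ,
      (Nat.card {m : Ideal (𝓞 K) // m ∈ S ∧ (Ideal.absNorm m : ℝ) ≤ x ∧ p ∣ m} : ℝ) /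
        (countS K S x : ℝ) = lam p + e p x)
    (ha : ∃ C : ℝ, ∀ᶠ x in atTop, ∀ m ∈ S, (Ideal.absNorm m : ℝ) ≤ x →
      (Nat.card {p : Ideal (𝓞 K) //
        p.IsPrime ∧ z x < (Ideal.absNorm p : ℝ) ∧ p ∣ m} : ℝ) ≤ C)
    (hb : (fun x : ℝ => ∑' p : {p : Ideal (𝓞 K) //
        p.IsPrime ∧ y x < (Ideal.absNorm p : ℝ) ∧ (Ideal.absNorm p : ℝ) ≤ z x}, lam p.1)
      =o[atTop] B)
    (hc : (fun x : ℝ => ∑' p : {p : Ideal (𝓞 K) //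
        p.IsPrime ∧ y x < (Ideal.absNorm p : ℝ) ∧ (Ideal.absNorm p : ℝ) ≤ z x}, |e p.1 x|)
      =o[atTop] B) :
    (∀ γ : ℝ, Tendsto (fun x : ℝ =>
        (Nat.card {m : Ideal (𝓞 K) // m ∈ S ∧ (Ideal.absNorm m : ℝ) ≤ x ∧
            ((omegaI K m : ℝ) - A x) / B x ≤ γ} : ℝ) /
          (countS K S x : ℝ)) atTop (𝓝 (Φ γ))) ↔
    (∀ γ : ℝ, Tendsto (fun x : ℝ =>
        (Nat.card {m : Ideal (𝓞 K) // m ∈ S ∧ (Ideal.absNorm m : ℝ) ≤ x ∧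
            ((omegaLe K (y x) m : ℝ) - A x) / B x ≤ γ} : ℝ) /
          (countS K S x : ℝ)) atTop (𝓝 (Φ γ))) := by
  simp only [natCard_div_countS_eq_proportion] at hdensity ⊢
  simp only [tsum_eq_sum_primeIdealsIoc _ _ lam] at hb
  simp only [fun x => tsum_eq_sum_primeIdealsIoc (y x) (z x) fun p => |e p x|] at hc
  exact tendsto_proportion_le_iff_of_expect_abs_sub_isLittleO hΦ
    (expect_abs_omegaI_sub_omegaLe_isLittleO hS0 hS hB hdensity ha hb hc)

end PrimeIdealDivisors

/-- Under conditions (a)–(c), the Gaussian limit law for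
`(ω(m) - log log x)/√(log log x)` on `S` is equivalent to the Gaussian limit law for
the truncated function `(ω_{y(x)}(m) - log log x)/√(log log x)`. -/
theorem gaussian_omega_iff_gaussian_omega_truncated
    (S : Set (Ideal (NumberField.RingOfIntegers K)))
    (hS0 : 0 ∉ S) (hSinf : S.Infinite)
    (β : ℝ) (hβ0 : 0 < β) (hβ1 : β ≤ 1)
    (y : ℝ → ℝ) (hy : ∀ x : ℝ, 1 < x → 1 < y x ∧ y x < x ^ β)
    (lam : Ideal (NumberField.RingOfIntegers K) → ℝ)
    (e : Ideal (NumberField.RingOfIntegers K) → ℝ → ℝ)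
    (hdensity : ∀ p : Ideal (NumberField.RingOfIntegers K), p.IsPrime → ∀ x : ℝ,
      (Nat.card {m : Ideal (NumberField.RingOfIntegers K) //
          m ∈ S ∧ (Ideal.absNorm m : ℝ) ≤ x ∧ p ∣ m} : ℝ) /
        (countS K S x : ℝ) = lam p + e p x)
    -- condition (a)
    (ha : ∃ C : ℝ, ∀ x : ℝ, 1 < x → ∀ m ∈ S, (Ideal.absNorm m : ℝ) ≤ x →
      (Nat.card {p : Ideal (NumberField.RingOfIntegers K) //
        p.IsPrime ∧ x ^ β < (Ideal.absNorm p : ℝ) ∧ p ∣ m} : ℝ) ≤ C)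
    -- condition (b)
    (hb : (fun x : ℝ => ∑' p : {p : Ideal (NumberField.RingOfIntegers K) //
        p.IsPrime ∧ y x < (Ideal.absNorm p : ℝ) ∧ (Ideal.absNorm p : ℝ) ≤ x ^ β}, lam p.1)
      =o[atTop] fun x : ℝ => Real.sqrt (Real.log (Real.log x)))
    -- condition (c)
    (hc : (fun x : ℝ => ∑' p : {p : Ideal (NumberField.RingOfIntegers K) //
        p.IsPrime ∧ y x < (Ideal.absNorm p : ℝ) ∧ (Ideal.absNorm p : ℝ) ≤ x ^ β}, |e p.1 x|)
      =o[atTop] fun x : ℝ => Real.sqrt (Real.log (Real.log x))) :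
    (∀ γ : ℝ, Tendsto (fun x : ℝ =>
        (Nat.card {m : Ideal (NumberField.RingOfIntegers K) //
            m ∈ S ∧ (Ideal.absNorm m : ℝ) ≤ x ∧
            ((omegaI K m : ℝ) - Real.log (Real.log x)) /
              Real.sqrt (Real.log (Real.log x)) ≤ γ} : ℝ) /
          (countS K S x : ℝ)) atTop (𝓝 (gaussPhi γ))) ↔
    (∀ γ : ℝ, Tendsto (fun x : ℝ =>
        (Nat.card {m : Ideal (NumberField.RingOfIntegers K) //
            m ∈ S ∧ (Ideal.absNorm m : ℝ) ≤ x ∧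
            ((omegaLe K (y x) m : ℝ) - Real.log (Real.log x)) /
              Real.sqrt (Real.log (Real.log x)) ≤ γ} : ℝ) /
          (countS K S x : ℝ)) atTop (𝓝 (gaussPhi γ))) := by
  exact gaussian_omega_iff_gaussian_omega_truncated_general hS0 hSinf.nonempty
    tendsto_sqrt_log_log_atTop continuous_gaussPhi hdensity
    (ha.imp fun _ hC => (eventually_gt_atTop 1).mono hC) hb hc

end
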